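/- arXiv:1009.4502 — 2 statements merged into one kernel-verified Lean document; each statement's English description precedes it below -/
import Mathlib

section
/- (Boltzmann's H theorem, inequality part.) Let f : ℝ³ → ℝ be continuous, strictly positive and rapidly decaying, and suppose ln f has polynomial growth (i.e. |ln f(v)| ≤ C(1+|v|)^m for some constants C, m). Then ∫_{ℝ³} C(f)(v) ln f(v) dv ≤ 0; indeed ∫_{ℝ³} C(f) ln f dv = −(1/4) ∫_{ℝ³}∫_{ℝ³}∫_{S²} (f(v')f(v*') − f(v)f(v*)) (ln(f(v')f(v*')) − ln(f(v)f(v*))) |(v−v*)·ω| dω dv* dv, and the integrand of the latter integral is pointwise nonnegative. -/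
/-!
The triple integrals are read as integrals over `S² × (ℝ³ × ℝ³)`. Write
`F = (f(v')f(v*') − f(v)f(v*)) |(v−v*)·ω|`. For a unit vector `ω` the collision map
`T_ω : (v, v*) ↦ (v', v*')` is a linear involution, so its determinant is `±1` and it preserves
Lebesgue measure; the exchange `(v, v*) ↦ (v*, v)` preserves it as well. Since `F` is invariant
under the exchange and changes sign under `T_ω`, the integral `I` of `F ln f(v)` equals that of
`F ln f(v*)`, of `−F ln f(v')` and of `−F ln f(v*')`. Adding the four expressions gives
`4 I = −∫ F (ln(f(v')f(v*')) − ln(f(v)f(v*)))`. Here `F (…) ≥ 0` pointwise because `ln` is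
increasing.

The changes of variables and Fubini's theorem need only that `F ln f(v)` be integrable
(`integrable_weighted`). With the sup norm on `ℝ³ × ℝ³`, both `T_ω` and its inverse enlarge
`1 + ‖(v, v*)‖` by at most a factor `3`, so rapid decay bounds both products in `F` by every
negative power of `1 + ‖(v, v*)‖`, which beats the polynomial growth of `ln f` and of the kernel.
-/

open MeasureTheory
open scoped RealInnerProductSpace

noncomputable section

/-- The post-collision velocity `v' = v − ((v−v*)·ω)ω`. -/
def vPost (v vs ω : EuclideanSpace ℝ (Fin 3)) : EuclideanSpace ℝ (Fin 3) :=
  v - ⟪v - vs, ω⟫ • ω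

/-- The post-collision velocity `v*' = v* + ((v−v*)·ω)ω`. -/
def vsPost (v vs ω : EuclideanSpace ℝ (Fin 3)) : EuclideanSpace ℝ (Fin 3) :=
  vs + ⟪v - vs, ω⟫ • ω

/-- The surface measure on the unit sphere `S² ⊂ ℝ³`. -/
def sphereMeasure : Measure (Metric.sphere (0 : EuclideanSpace ℝ (Fin 3)) 1) :=
  (volume : Measure (EuclideanSpace ℝ (Fin 3))).toSphere

/-- The (dimensionless, hard-sphere) Boltzmann collision integral
`C(f)(v) = ∫_{ℝ³}∫_{S²} (f(v')f(v*') − f(v)f(v*)) |(v−v*)·ω| dω dv*`. -/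
def collisionIntegral (f : EuclideanSpace ℝ (Fin 3) → ℝ)
    (v : EuclideanSpace ℝ (Fin 3)) : ℝ :=
  ∫ vs, (∫ ω : Metric.sphere (0 : EuclideanSpace ℝ (Fin 3)) 1,
    (f (vPost v vs ω) * f (vsPost v vs ω) - f v * f vs) *
      |⟪v - vs, (ω : EuclideanSpace ℝ (Fin 3))⟫| ∂sphereMeasure)

/-- A function on `ℝ³` is rapidly decaying if `sup_v (1+|v|)^k f(v) < ∞` for every `k ∈ ℕ`. -/
def RapidlyDecaying (f : EuclideanSpace ℝ (Fin 3) → ℝ) : Prop :=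
  ∀ k : ℕ, ∃ C : ℝ, ∀ v, (1 + ‖v‖) ^ k * f v ≤ C

/-- `ln f` has polynomial growth: `|ln f(v)| ≤ C(1+|v|)^m` for some constants `C, m`. -/
def LogPolyGrowth (f : EuclideanSpace ℝ (Fin 3) → ℝ) : Prop :=
  ∃ (C : ℝ) (m : ℕ), ∀ v, |Real.log (f v)| ≤ C * (1 + ‖v‖) ^ m

/-! ### The collision map -/

/-- Velocity space `ℝ³`. -/
local notation "E3" => EuclideanSpace ℝ (Fin 3)

/-- The unit sphere `S²`. -/
local notation "S2" => Metric.sphere (0 : EuclideanSpace ℝ (Fin 3)) 1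

/-- The collision map `(v, v*) ↦ (v', v*')` for a fixed direction `ω`. -/
def collisionMap (ω : E3) : (E3 × E3) →ₗ[ℝ] (E3 × E3) where
  toFun p := (vPost p.1 p.2 ω, vsPost p.1 p.2 ω)
  map_add' p q := by
    simp only [vPost, vsPost, Prod.fst_add, Prod.snd_add, Prod.mk_add_mk, inner_sub_left,
      inner_add_left]
    congr 1 <;> module
  map_smul' c p := by
    simp only [vPost, vsPost, Prod.smul_fst, Prod.smul_snd, Prod.smul_mk, inner_sub_left,
      real_inner_smul_left, RingHom.id_apply]
    congr 1 <;> module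

lemma collisionMap_apply (ω : E3) (p : E3 × E3) :
    collisionMap ω p = (vPost p.1 p.2 ω, vsPost p.1 p.2 ω) := rfl

/-- The normal component of the relative velocity is reversed by a collision. -/
lemma inner_post (v vs ω : E3) (hω : ‖ω‖ = 1) :
    ⟪vPost v vs ω - vsPost v vs ω, ω⟫ = -⟪v - vs, ω⟫ := by
  have h : ⟪ω, ω⟫ = (1 : ℝ) := by rw [real_inner_self_eq_norm_sq, hω]; norm_num
  simp only [vPost, vsPost, inner_sub_left, inner_add_left, real_inner_smul_left, h]
  ring

lemma vPost_post (v vs ω : E3) (hω : ‖ω‖ = 1) :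
    vPost (vPost v vs ω) (vsPost v vs ω) ω = v := by
  rw [vPost, inner_post v vs ω hω, vPost]; module

lemma vsPost_post (v vs ω : E3) (hω : ‖ω‖ = 1) :
    vsPost (vPost v vs ω) (vsPost v vs ω) ω = vs := by
  rw [vsPost, inner_post v vs ω hω, vsPost]; module

lemma vPost_swap (v vs ω : E3) : vPost vs v ω = vsPost v vs ω := by
  simp only [vPost, vsPost, inner_sub_left]; module

lemma vsPost_swap (v vs ω : E3) : vsPost vs v ω = vPost v vs ω := by
  simp only [vPost, vsPost, inner_sub_left]; module

lemma collisionMap_involutive (ω : E3) (hω : ‖ω‖ = 1) (p : E3 × E3) :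
    collisionMap ω (collisionMap ω p) = p := by
  simp only [collisionMap_apply, vPost_post _ _ _ hω, vsPost_post _ _ _ hω]

instance : (volume : Measure (E3 × E3)).IsAddHaarMeasure :=
  inferInstanceAs ((volume : Measure E3).prod (volume : Measure E3)).IsAddHaarMeasure

/-- The collision map is a linear involution, hence has determinant `±1` and preserves volume. -/
lemma map_collisionMap_volume (ω : E3) (hω : ‖ω‖ = 1) :
    Measure.map (collisionMap ω) (volume : Measure (E3 × E3)) = volume := by
  have hcomp : collisionMap ω ∘ₗ collisionMap ω = LinearMap.id :=
    LinearMap.ext (collisionMap_involutive ω hω)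
  have hdet : LinearMap.det (collisionMap ω) * LinearMap.det (collisionMap ω) = 1 := by
    rw [← LinearMap.det_comp, hcomp, LinearMap.det_id]
  have h0 : LinearMap.det (collisionMap ω) ≠ 0 := left_ne_zero_of_mul_eq_one hdet
  rw [Measure.map_linearMap_addHaar_eq_smul_addHaar _ h0]
  rcases mul_self_eq_one_iff.mp hdet with h | h <;> simp [h]

/-! ### Symmetries of the collision measure -/

instance : IsFiniteMeasure sphereMeasure := by unfold sphereMeasure; infer_instance

/-- The measure `dω dv dv*` on `S² × (ℝ³ × ℝ³)`. -/
def collMeasure : Measure (S2 × (E3 × E3)) := sphereMeasure.prod volume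

lemma continuous_collision :
    Continuous (fun z : S2 × (E3 × E3) => collisionMap (z.1 : E3) z.2) := by
  simp only [collisionMap_apply, vPost, vsPost]
  fun_prop

lemma measurePreserving_collision :
    MeasurePreserving (fun z : S2 × (E3 × E3) => (z.1, collisionMap (z.1 : E3) z.2))
      collMeasure collMeasure := by
  refine (MeasurePreserving.id sphereMeasure).skew_product
    (g := fun (ω : S2) p => collisionMap (ω : E3) p) ?_ ?_
  · exact continuous_collision.measurable
  · exact Filter.Eventually.of_forall fun ω =>
      map_collisionMap_volume _ (by simp)

lemma measurePreserving_exchange :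
    MeasurePreserving (fun z : S2 × (E3 × E3) => (z.1, z.2.swap))
      collMeasure collMeasure :=
  (MeasurePreserving.id sphereMeasure).prod
    (Measure.measurePreserving_swap (μ := (volume : Measure E3)) (ν := (volume : Measure E3)))

/-- The integrand of the collision integral, `(f(v')f(v*') − f(v)f(v*)) |(v−v*)·ω|`. -/
def collF (f : E3 → ℝ) (z : S2 × (E3 × E3)) : ℝ :=
  (f (vPost z.2.1 z.2.2 z.1) * f (vsPost z.2.1 z.2.2 z.1) - f z.2.1 * f z.2.2) *
    |⟪z.2.1 - z.2.2, (z.1 : E3)⟫|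

lemma collF_collision (f : E3 → ℝ) (z : S2 × (E3 × E3)) :
    collF f (z.1, collisionMap (z.1 : E3) z.2) = -collF f z := by
  have hω : ‖(z.1 : E3)‖ = 1 := by simp
  simp only [collF, collisionMap_apply, vPost_post _ _ _ hω, vsPost_post _ _ _ hω,
    inner_post _ _ _ hω, abs_neg]
  ring

lemma collF_exchange (f : E3 → ℝ) (z : S2 × (E3 × E3)) :
    collF f (z.1, z.2.swap) = collF f z := by
  simp only [collF, Prod.fst_swap, Prod.snd_swap]
  rw [vPost_swap z.2.1 z.2.2, vsPost_swap z.2.1 z.2.2, ← neg_sub z.2.1 z.2.2, inner_neg_left, abs_neg]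
  ring

lemma continuous_collF (f : E3 → ℝ) (hf : Continuous f) : Continuous (collF f) := by
  unfold collF vPost vsPost
  fun_prop

/-! ### Integrability -/

/-- The collision map enlarges the sup norm at most threefold. -/
lemma norm_collisionMap_le (ω : E3) (hω : ‖ω‖ = 1) (p : E3 × E3) :
    ‖collisionMap ω p‖ ≤ 3 * ‖p‖ := by
  have h1 : ‖p.1‖ ≤ ‖p‖ := norm_fst_le p
  have h2 : ‖p.2‖ ≤ ‖p‖ := norm_snd_le p
  have h3 : ‖⟪p.1 - p.2, ω⟫ • ω‖ ≤ 2 * ‖p‖ := by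
    rw [norm_smul, hω, mul_one]
    have := norm_inner_le_norm (𝕜 := ℝ) (p.1 - p.2) ω
    rw [hω, mul_one] at this
    linarith [norm_sub_le p.1 p.2]
  rw [collisionMap_apply, Prod.norm_def]
  refine max_le ?_ ?_
  · exact (norm_sub_le _ _).trans (by linarith)
  · exact (norm_add_le _ _).trans (by linarith)

/-- `f(v) f(v*)` decays faster than any power of the sup norm of `(v, v*)`. -/
lemma prod_decay (f : E3 → ℝ) (hpos : ∀ v, 0 < f v) (hdec : RapidlyDecaying f) (k : ℕ) :
    ∃ C : ℝ, 0 ≤ C ∧ ∀ p : E3 × E3, (1 + ‖p‖) ^ k * (f p.1 * f p.2) ≤ C := by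
  obtain ⟨C, hC⟩ := hdec k
  have hC0 : 0 ≤ C := le_trans (by have := hpos 0; positivity) (hC 0)
  refine ⟨C * C, by positivity, fun p => ?_⟩
  have h1 := (hpos p.1).le
  have h2 := (hpos p.2).le
  have hle : 1 + ‖p‖ ≤ (1 + ‖p.1‖) * (1 + ‖p.2‖) := by
    have a := norm_nonneg p.1
    have b := norm_nonneg p.2
    rw [Prod.norm_def]
    rcases max_cases ‖p.1‖ ‖p.2‖ with h | h <;> rw [h.1] <;> nlinarith [mul_nonneg a b]
  calc (1 + ‖p‖) ^ k * (f p.1 * f p.2)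
      ≤ ((1 + ‖p.1‖) * (1 + ‖p.2‖)) ^ k * (f p.1 * f p.2) := by gcongr
    _ = ((1 + ‖p.1‖) ^ k * f p.1) * ((1 + ‖p.2‖) ^ k * f p.2) := by rw [mul_pow]; ring
    _ ≤ C * C := mul_le_mul (hC _) (hC _) (by positivity) hC0

lemma integrable_weighted (f : E3 → ℝ) (hf : Continuous f) (hpos : ∀ v, 0 < f v)
    (hdec : RapidlyDecaying f) (hlog : LogPolyGrowth f) :
    Integrable (fun z => collF f z * Real.log (f z.2.1)) collMeasure := by
  obtain ⟨L, m, hL⟩ := hlog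
  have hL0 : 0 ≤ L := by simpa using (abs_nonneg _).trans (hL 0)
  -- The kernel and the logarithm cost `m + 1` powers; `7` more exceed `dim (ℝ³ × ℝ³) = 6`.
  obtain ⟨C, hC0, hC⟩ := prod_decay f hpos hdec (m + 8)
  have hint : Integrable (fun p : E3 × E3 => (1 + ‖p‖) ^ (-(7 : ℝ))) volume := by
    apply integrable_one_add_norm
    simp
    norm_num
  have hbound : Integrable (fun z : S2 × (E3 × E3) =>
      (3 ^ (m + 8) * C + C) * 2 * L * (1 + ‖z.2‖) ^ (-(7 : ℝ))) collMeasure :=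
    (hint.comp_snd sphereMeasure).const_mul _
  refine hbound.mono' ?_ (Filter.Eventually.of_forall fun z => ?_)
  · refine Continuous.aestronglyMeasurable ?_
    refine (continuous_collF f hf).mul (Continuous.log (by fun_prop) fun z => (hpos _).ne')
  · obtain ⟨ω, p⟩ := z
    have hω : ‖(ω : E3)‖ = 1 := by simp
    set M := 1 + ‖p‖ with hM
    have hM1 : 1 ≤ M := by have := norm_nonneg p; linarith
    have hM0 : 0 < M := by linarith
    have hker : |⟪p.1 - p.2, (ω : E3)⟫| ≤ 2 * M := by
      have := abs_real_inner_le_norm (p.1 - p.2) (ω : E3)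
      rw [hω, mul_one] at this
      linarith [norm_sub_le p.1 p.2, norm_fst_le p, norm_snd_le p]
    have hlogb : |Real.log (f p.1)| ≤ L * M ^ m := by
      refine (hL p.1).trans ?_
      have : 1 + ‖p.1‖ ≤ M := by linarith [norm_fst_le p]
      gcongr
    have hT : M ≤ 3 * (1 + ‖collisionMap (ω : E3) p‖) := by
      have := norm_collisionMap_le ω hω (collisionMap ω p)
      rw [collisionMap_involutive _ hω] at this
      linarith
    have h1 : M ^ (m + 8) * (f (vPost p.1 p.2 ω) * f (vsPost p.1 p.2 ω)) ≤ 3 ^ (m + 8) * C := by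
      have hp1 := (hpos (vPost p.1 p.2 ω)).le
      have hp2 := (hpos (vsPost p.1 p.2 ω)).le
      calc _ ≤ (3 * (1 + ‖collisionMap (ω : E3) p‖)) ^ (m + 8) *
              (f (vPost p.1 p.2 ω) * f (vsPost p.1 p.2 ω)) := by gcongr
        _ = 3 ^ (m + 8) * ((1 + ‖collisionMap (ω : E3) p‖) ^ (m + 8) *
              (f (vPost p.1 p.2 ω) * f (vsPost p.1 p.2 ω))) := by rw [mul_pow]; ring
        _ ≤ _ := by
          gcongr
          exact hC (collisionMap ω p)
    have h2 : M ^ (m + 8) * (f p.1 * f p.2) ≤ C := hC p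
    have hdiff : M ^ (m + 8) * |f (vPost p.1 p.2 ω) * f (vsPost p.1 p.2 ω) - f p.1 * f p.2|
        ≤ 3 ^ (m + 8) * C + C := by
      have ha := mul_pos (hpos (vPost p.1 p.2 ω)) (hpos (vsPost p.1 p.2 ω))
      have hb := mul_pos (hpos p.1) (hpos p.2)
      refine le_trans ?_ (add_le_add h1 h2)
      rw [← mul_add]
      gcongr
      rw [abs_le]
      constructor <;> linarith
    have hrp : M ^ (-(7 : ℝ)) = (M ^ 7)⁻¹ := by
      rw [Real.rpow_neg hM0.le]; norm_cast
    simp only [collF, Real.norm_eq_abs, abs_mul, abs_abs]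
    rw [hrp, ← div_eq_mul_inv, le_div_iff₀ (by positivity)]
    calc _ ≤ |f (vPost p.1 p.2 ω) * f (vsPost p.1 p.2 ω) - f p.1 * f p.2| * (2 * M) *
            (L * M ^ m) * M ^ 7 := by gcongr
      _ = (M ^ (m + 8) * |f (vPost p.1 p.2 ω) * f (vsPost p.1 p.2 ω) - f p.1 * f p.2|) *
            2 * L := by ring
      _ ≤ _ := by gcongr

/-! ### The entropy identity -/

/-- Fubini: an integral over `S² × (ℝ³ × ℝ³)` as the iterated integral `dω dv* dv`. -/
lemma integral_collMeasure (g : S2 × (E3 × E3) → ℝ) (hg : Integrable g collMeasure) :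
    ∫ z, g z ∂collMeasure = ∫ v, ∫ vs, ∫ ω, g (ω, (v, vs)) ∂sphereMeasure := by
  unfold collMeasure at hg ⊢
  rw [integral_prod_symm _ hg, Measure.volume_eq_prod, integral_prod]
  exact hg.integral_prod_right

lemma sub_mul_log_sub_log_nonneg {a b : ℝ} (ha : 0 < a) (hb : 0 < b) :
    0 ≤ (a - b) * (Real.log a - Real.log b) := by
  rcases le_total a b with h | h
  · exact mul_nonneg_of_nonpos_of_nonpos (by linarith)
      (by linarith [Real.log_le_log ha h])
  · exact mul_nonneg (by linarith) (by linarith [Real.log_le_log hb h])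

/-- **Boltzmann's H theorem (inequality part).** For `f` continuous, strictly positive and
rapidly decaying with `ln f` of polynomial growth, `∫ C(f) ln f dv ≤ 0`; indeed
`∫ C(f) ln f dv = −(1/4) ∫∫∫ (f'f*' − ff*)(ln(f'f*') − ln(ff*)) |(v−v*)·ω| dω dv* dv`,
whose integrand is pointwise nonnegative. -/
theorem H_theorem_inequality (f : EuclideanSpace ℝ (Fin 3) → ℝ)
    (hf_cont : Continuous f) (hf_pos : ∀ v, 0 < f v)
    (hf_dec : RapidlyDecaying f) (hf_log : LogPolyGrowth f) :
    (∀ v vs ω : EuclideanSpace ℝ (Fin 3), ‖ω‖ = 1 →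
      0 ≤ (f (vPost v vs ω) * f (vsPost v vs ω) - f v * f vs) *
            (Real.log (f (vPost v vs ω) * f (vsPost v vs ω)) -
              Real.log (f v * f vs)) * |⟪v - vs, ω⟫|) ∧
    (∫ v, collisionIntegral f v * Real.log (f v)) =
      -(1 / 4) * ∫ v, (∫ vs, (∫ ω : Metric.sphere (0 : EuclideanSpace ℝ (Fin 3)) 1,
        (f (vPost v vs ω) * f (vsPost v vs ω) - f v * f vs) *
          (Real.log (f (vPost v vs ω) * f (vsPost v vs ω)) - Real.log (f v * f vs)) *
          |⟪v - vs, (ω : EuclideanSpace ℝ (Fin 3))⟫| ∂sphereMeasure)) ∧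
    (∫ v, collisionIntegral f v * Real.log (f v)) ≤ 0 := by
  have hnn : ∀ v vs ω : E3,
      0 ≤ (f (vPost v vs ω) * f (vsPost v vs ω) - f v * f vs) *
            (Real.log (f (vPost v vs ω) * f (vsPost v vs ω)) -
              Real.log (f v * f vs)) * |⟪v - vs, ω⟫| := fun v vs ω =>
    mul_nonneg (sub_mul_log_sub_log_nonneg (mul_pos (hf_pos _) (hf_pos _))
      (mul_pos (hf_pos _) (hf_pos _))) (abs_nonneg _)
  have i1 := integrable_weighted f hf_cont hf_pos hf_dec hf_log
  have hlhs : (∫ v, collisionIntegral f v * Real.log (f v)) =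
      ∫ z, collF f z * Real.log (f z.2.1) ∂collMeasure := by
    rw [integral_collMeasure _ i1]
    simp only [collisionIntegral, collF, integral_mul_const]
  -- The other three weights arise by pulling `F ln f(v)` back along measure preserving maps.
  have transfer : ∀ (φ : S2 × (E3 × E3) → S2 × (E3 × E3)) (_ : MeasurePreserving φ collMeasure
      collMeasure) (_ : Function.Involutive φ)
      (g : S2 × (E3 × E3) → ℝ) (_ : Integrable g collMeasure),
      Integrable (fun z => g (φ z)) collMeasure ∧
        ∫ z, g (φ z) ∂collMeasure = ∫ z, g z ∂collMeasure := by
    intro φ hφ hinv g hg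
    let e : S2 × (E3 × E3) ≃ᵐ S2 × (E3 × E3) := ⟨hinv.toPerm, hφ.measurable, hφ.measurable⟩
    exact ⟨hφ.integrable_comp_of_integrable hg, hφ.integral_comp e.measurableEmbedding g⟩
  have hTinv : Function.Involutive
      (fun z : S2 × (E3 × E3) => (z.1, collisionMap (z.1 : E3) z.2)) := fun z =>
    Prod.ext rfl (collisionMap_involutive _ (by simp) _)
  have hTt := transfer _ measurePreserving_collision hTinv
  obtain ⟨i2, e2⟩ := transfer _ measurePreserving_exchange (fun z => by simp) _ i1
  simp only [collF_exchange, Prod.fst_swap] at i2 e2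
  obtain ⟨i3, e3⟩ := hTt _ i1
  obtain ⟨i4, e4⟩ := hTt _ i2
  simp only [collF_collision] at i3 e3 i4 e4
  simp only [collisionMap_apply] at i3 e3 i4 e4
  have i12 := i1.fun_add i2
  have i123 := i12.fun_add i3
  have hpt : ∀ z : S2 × (E3 × E3),
      (f (vPost z.2.1 z.2.2 z.1) * f (vsPost z.2.1 z.2.2 z.1) - f z.2.1 * f z.2.2) *
          (Real.log (f (vPost z.2.1 z.2.2 z.1) * f (vsPost z.2.1 z.2.2 z.1)) -
            Real.log (f z.2.1 * f z.2.2)) * |⟪z.2.1 - z.2.2, (z.1 : E3)⟫| =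
      -(collF f z * Real.log (f z.2.1) + collF f z * Real.log (f z.2.2) +
        -collF f z * Real.log (f (vPost z.2.1 z.2.2 z.1)) +
        -collF f z * Real.log (f (vsPost z.2.1 z.2.2 z.1))) := by
    intro z
    rw [Real.log_mul (hf_pos _).ne' (hf_pos _).ne', Real.log_mul (hf_pos _).ne' (hf_pos _).ne',
      collF]
    ring
  have hrhs : (∫ v, (∫ vs, (∫ ω : S2,
        (f (vPost v vs ω) * f (vsPost v vs ω) - f v * f vs) *
          (Real.log (f (vPost v vs ω) * f (vsPost v vs ω)) - Real.log (f v * f vs)) *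
          |⟪v - vs, (ω : E3)⟫| ∂sphereMeasure))) =
      -(4 * ∫ z, collF f z * Real.log (f z.2.1) ∂collMeasure) := by
    have i6 := (i123.fun_add i4).neg
    rw [← integral_collMeasure (fun z =>
      (f (vPost z.2.1 z.2.2 z.1) * f (vsPost z.2.1 z.2.2 z.1) - f z.2.1 * f z.2.2) *
          (Real.log (f (vPost z.2.1 z.2.2 z.1) * f (vsPost z.2.1 z.2.2 z.1)) -
            Real.log (f z.2.1 * f z.2.2)) * |⟪z.2.1 - z.2.2, (z.1 : E3)⟫|)
      (i6.congr (Filter.Eventually.of_forall fun z => (hpt z).symm))]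
    simp only [hpt]
    rw [integral_neg, integral_add i123 i4, integral_add i12 i3, integral_add i1 i2,
      e4, e3, e2]
    ring
  have hid : (∫ v, collisionIntegral f v * Real.log (f v)) =
      -(1 / 4) * ∫ v, (∫ vs, (∫ ω : S2,
        (f (vPost v vs ω) * f (vsPost v vs ω) - f v * f vs) *
          (Real.log (f (vPost v vs ω) * f (vsPost v vs ω)) - Real.log (f v * f vs)) *
          |⟪v - vs, (ω : E3)⟫| ∂sphereMeasure)) := by
    rw [hrhs, hlhs]; ring
  refine ⟨fun v vs ω _ => hnn v vs ω, hid, ?_⟩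
  rw [hid]
  refine mul_nonpos_of_nonpos_of_nonneg (by norm_num) ?_
  exact integral_nonneg fun v => integral_nonneg fun vs => integral_nonneg fun ω => hnn v vs ω

end
end

section
/- Let g be an infinitesimal Maxwellian, i.e. g(v) = ρ + u·v + θ(|v|² − 3)/2 for some ρ, θ ∈ ℝ and u ∈ ℝ³, and let Q_M(g,g)(v) := M(v)^{−1} C(Mg)(v), where C is the hard-sphere collision integral and M the standard Maxwellian. Then Q_M(g,g) = (1/2) L_M(g²), i.e. for every v ∈ ℝ³, M(v)^{−1} C(Mg)(v) = (1/2) ∫_{ℝ³}∫_{S²} (g(v)² + g(v*)² − g(v')² − g(v*')²) |(v−v*)·ω| M(v*) dω dv*. -/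
/-!
The two integrands agree pointwise, so no integrability is needed. A collision conserves momentum
and energy (`vPost_add_vsPost`, `norm_sq_vPost_add_norm_sq_vsPost`). Hence `M' M*' = M M*`
(`stdMaxwellian_vPost_mul_vsPost`), and an infinitesimal Maxwellian `g`, being a combination of
`1`, `v` and `|v|²`, satisfies `g' + g*' = g + g*`. Squaring the latter gives
`g' g*' - g g* = (g² + g*² - g'² - g*'²) / 2`, which is the claimed identity after multiplication by
`M* |(v - v*)·ω|`.
-/

open MeasureTheory
open scoped RealInnerProductSpace

noncomputable section

/-- The standard Maxwellian `M(v) = (2π)^{−3/2} exp(−|v|²/2)`. -/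
def stdMaxwellian (v : EuclideanSpace ℝ (Fin 3)) : ℝ :=
  (2 * Real.pi) ^ (-(3 : ℝ) / 2) * Real.exp (-‖v‖ ^ 2 / 2)

/-- The collision operator linearized at the standard Maxwellian `M`:
`L_Mφ(v) = ∫_{ℝ³}∫_{S²} (φ(v) + φ(v*) − φ(v') − φ(v*')) |(v−v*)·ω| M(v*) dω dv*`. -/
def linearizedCollision (φ : EuclideanSpace ℝ (Fin 3) → ℝ)
    (v : EuclideanSpace ℝ (Fin 3)) : ℝ :=
  ∫ vs, (∫ ω : Metric.sphere (0 : EuclideanSpace ℝ (Fin 3)) 1,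
    (φ v + φ vs - φ (vPost v vs ω) - φ (vsPost v vs ω)) *
      |⟪v - vs, (ω : EuclideanSpace ℝ (Fin 3))⟫| * stdMaxwellian vs ∂sphereMeasure)

/-- Energy is conserved in a collision. -/
lemma norm_sq_vPost_add_norm_sq_vsPost (v vs ω : EuclideanSpace ℝ (Fin 3)) (hω : ‖ω‖ = 1) :
    ‖vPost v vs ω‖ ^ 2 + ‖vsPost v vs ω‖ ^ 2 = ‖v‖ ^ 2 + ‖vs‖ ^ 2 := by
  unfold vPost vsPost
  rw [norm_sub_sq_real, norm_add_sq_real, norm_smul, hω, inner_smul_right, inner_smul_right,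
    mul_one, Real.norm_eq_abs, sq_abs, inner_sub_left]
  ring

/-- Momentum is conserved in a collision. -/
lemma vPost_add_vsPost (v vs ω : EuclideanSpace ℝ (Fin 3)) :
    vPost v vs ω + vsPost v vs ω = v + vs := by
  unfold vPost vsPost
  abel

/-- Detailed balance `M(v') M(v*') = M(v) M(v*)`, a consequence of energy conservation. -/
lemma stdMaxwellian_vPost_mul_vsPost (v vs ω : EuclideanSpace ℝ (Fin 3)) (hω : ‖ω‖ = 1) :
    stdMaxwellian (vPost v vs ω) * stdMaxwellian (vsPost v vs ω) =
      stdMaxwellian v * stdMaxwellian vs := by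
  have h := norm_sq_vPost_add_norm_sq_vsPost v vs ω hω
  unfold stdMaxwellian
  rw [mul_mul_mul_comm, mul_mul_mul_comm _ (Real.exp (-‖v‖ ^ 2 / 2)), ← Real.exp_add,
    ← Real.exp_add]
  congr 2
  linarith

lemma stdMaxwellian_pos (v : EuclideanSpace ℝ (Fin 3)) : 0 < stdMaxwellian v := by
  unfold stdMaxwellian
  positivity

/-- **Quadratic collision operator on infinitesimal Maxwellians.** If
`g(v) = ρ + u·v + θ(|v|² − 3)/2` and `Q_M(g,g) := M⁻¹ C(Mg)`, then
`Q_M(g,g) = (1/2) L_M(g²)` pointwise. -/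
theorem quadratic_collision_of_infinitesimal_maxwellian
    (g : EuclideanSpace ℝ (Fin 3) → ℝ) (ρ θ : ℝ) (u : EuclideanSpace ℝ (Fin 3))
    (hg : ∀ v, g v = ρ + ⟪u, v⟫ + θ * (‖v‖ ^ 2 - 3) / 2) :
    ∀ v : EuclideanSpace ℝ (Fin 3),
      (stdMaxwellian v)⁻¹ * collisionIntegral (fun w => stdMaxwellian w * g w) v =
        (1 / 2) * linearizedCollision (fun w => (g w) ^ 2) v := by
  intro v
  unfold collisionIntegral linearizedCollision
  -- `integral_const_mul` needs no integrability, so the constants move inside unconditionally.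
  simp_rw [← integral_const_mul]
  congr 1
  funext vs
  congr 1
  funext ω
  have hω : ‖(ω : EuclideanSpace ℝ (Fin 3))‖ = 1 := norm_eq_of_mem_sphere ω
  have hE := norm_sq_vPost_add_norm_sq_vsPost v vs ω hω
  have hP : ⟪u, vPost v vs ω⟫ + ⟪u, vsPost v vs ω⟫ = ⟪u, v⟫ + ⟪u, vs⟫ := by
    rw [← inner_add_right, vPost_add_vsPost, inner_add_right]
  have hM := stdMaxwellian_vPost_mul_vsPost v vs ω hω
  have hG : g (vPost v vs ω) + g (vsPost v vs ω) = g v + g vs := by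
    simp only [hg]
    linear_combination hP + θ / 2 * hE
  have hv := (stdMaxwellian_pos v).ne'
  have hMg : stdMaxwellian (vPost v vs ω) * g (vPost v vs ω) *
        (stdMaxwellian (vsPost v vs ω) * g (vsPost v vs ω)) -
      stdMaxwellian v * g v * (stdMaxwellian vs * g vs) =
      stdMaxwellian v * (stdMaxwellian vs *
        (g (vPost v vs ω) * g (vsPost v vs ω) - g v * g vs)) := by
    linear_combination g (vPost v vs ω) * g (vsPost v vs ω) * hM
  -- Squaring `g' + g*' = g + g*` turns the difference of products into one of squares.
  have hSq : g (vPost v vs ω) * g (vsPost v vs ω) - g v * g vs =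
      1 / 2 * (g v ^ 2 + g vs ^ 2 - g (vPost v vs ω) ^ 2 - g (vsPost v vs ω) ^ 2) := by
    linear_combination
      (g (vPost v vs ω) + g (vsPost v vs ω) + g v + g vs) / 2 * hG
  rw [hMg, hSq, mul_assoc (stdMaxwellian v), inv_mul_cancel_left₀ hv]
  ring

end
end
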